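/- Let X be a real-valued random variable with unbounded distribution F and Y a nonnegative random variable with distribution G, neither degenerate at zero, and let H be the distribution of XY. Suppose (X,Y) satisfies Assumption 1 (there is a measurable function h:[0,∞)→(0,∞) such that P(X>x | Y=y) ~ h(y)P(X>x) as x→∞ uniformly in y≥0) and Assumption 2 (Ḡ(bx)=o(H̄(x)) as x→∞ for every constant b>0). If F belongs to the class L(γ) for some γ≥0, then H belongs to L(γ/β_G), where β_G=sup{y:G(y)<1}∈(0,∞] is the right endpoint of G and γ/β_G is understood as 0 when β_G=∞. -/

import Mathlib

open MeasureTheory ProbabilityTheory Filter Set Asymptotics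

noncomputable section

/-- The tail (survival) function `x ↦ P(Z > x)` of a random variable `Z`. -/
def rvTail {Ω : Type*} [MeasureSpace Ω] (Z : Ω → ℝ) (x : ℝ) : ℝ :=
  (ℙ {ω | x < Z ω}).toReal

/-- The cumulative distribution function `x ↦ P(Z ≤ x)` of a random variable `Z`. -/
def rvCdf {Ω : Type*} [MeasureSpace Ω] (Z : Ω → ℝ) (x : ℝ) : ℝ :=
  (ℙ {ω | Z ω ≤ x}).toReal

/-- The left limit of the cdf, `G(y-) = P(Z < y)`. -/
def rvCdfLeft {Ω : Type*} [MeasureSpace Ω] (Z : Ω → ℝ) (y : ℝ) : ℝ :=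
  (ℙ {ω | Z ω < y}).toReal

/-- The distribution of `Z` is unbounded (above): its tail is positive for every `x > 0`. -/
def UnboundedDist {Ω : Type*} [MeasureSpace Ω] (Z : Ω → ℝ) : Prop :=
  ∀ x > 0, 0 < rvTail Z x

/-- The support `D_Z = {y : P(Z ∈ (y - δ, y + δ)) > 0 for all δ > 0}` of the
distribution of `Z`. -/
def distSupport {Ω : Type*} [MeasureSpace Ω] (Z : Ω → ℝ) : Set ℝ :=
  {y | ∀ δ > 0, 0 < ℙ {ω | Z ω ∈ Ioo (y - δ) (y + δ)}}

/-- The distribution of `Z` belongs to the class `L(γ)`: it is unbounded above and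
`P(Z > x - t) ~ e^{γ t} P(Z > x)` as `x → ∞`, for every `t > 0`. -/
def MemLGamma {Ω : Type*} [MeasureSpace Ω] (Z : Ω → ℝ) (γ : ℝ) : Prop :=
  UnboundedDist Z ∧
    ∀ t > 0, (fun x => rvTail Z (x - t)) ~[atTop] (fun x => Real.exp (γ * t) * rvTail Z x)

/-- The tail of the two-fold convolution of the distribution of `Z` with itself. -/
def convSqTail {Ω : Type*} [MeasureSpace Ω] (Z : Ω → ℝ) (x : ℝ) : ℝ :=
  (((Measure.map Z ℙ).conv (Measure.map Z ℙ)) (Ioi x)).toReal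

/-- The distribution of `Z` belongs to the class `S(γ)`: it belongs to `L(γ)`, the
exponential moment `c = ∫ e^{γ y} dV(y)` is finite, and the tail of the two-fold
convolution satisfies `V̄*²(x) ~ 2 c V̄(x)` as `x → ∞`. -/
def MemSGamma {Ω : Type*} [MeasureSpace Ω] (Z : Ω → ℝ) (γ : ℝ) : Prop :=
  MemLGamma Z γ ∧
    Integrable (fun y => Real.exp (γ * y)) (Measure.map Z ℙ) ∧
    (fun x => convSqTail Z x) ~[atTop]
      (fun x => 2 * (∫ y, Real.exp (γ * y) ∂(Measure.map Z ℙ)) * rvTail Z x)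

open Classical in
/-- `γ / β_G`, where `β_G = sup {y : G(y) < 1}` is the right endpoint of the distribution
of `Z`, with the convention that `γ / β_G = 0` when `β_G = ∞`.
(Note that `G(y) < 1 ↔ P(Z > y) > 0`.) -/
def gammaOverBeta {Ω : Type*} [MeasureSpace Ω] (Z : Ω → ℝ) (γ : ℝ) : ℝ :=
  if BddAbove {y : ℝ | 0 < rvTail Z y} then γ / sSup {y : ℝ | 0 < rvTail Z y} else 0

/-- Assumption 2: `Ḡ(b x) = o(H̄(x))` as `x → ∞` for every constant `b > 0`, where `G` is
the distribution of `Y` and `H` is the distribution of the product `X Y`. -/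
def Assumption2 {Ω : Type*} [MeasureSpace Ω] (X Y : Ω → ℝ) : Prop :=
  ∀ b > 0, (fun x => rvTail Y (b * x)) =o[atTop] fun x => rvTail (fun ω => X ω * Y ω) x

/-- Assumption 1: `K x y` is the conditional probability `P(X > x | Y = y)`, namely for
`y` in the support of `Y` it is the limit of `P(X > x | Y ∈ (y - δ, y + δ])` as `δ → 0+`,
and for `y` outside the support it is the unconditional probability `P(X > x)` (and then
`h y = 1`); `h : [0,∞) → (0,∞)` is a measurable function such that
`P(X > x | Y = y) ~ h(y) P(X > x)` as `x → ∞`, uniformly for `y ≥ 0`. -/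
def Assumption1 {Ω : Type*} [MeasureSpace Ω] (X Y : Ω → ℝ) (h : ℝ → ℝ) (K : ℝ → ℝ → ℝ) :
    Prop :=
  Measurable h ∧ (∀ y, 0 ≤ y → 0 < h y) ∧
    (∀ y, y ∉ distSupport Y → h y = 1 ∧ ∀ x, K x y = rvTail X x) ∧
    (∀ y ∈ distSupport Y, ∀ x : ℝ,
      Tendsto
        (fun δ : ℝ => (ℙ {ω | x < X ω ∧ Y ω ∈ Ioc (y - δ) (y + δ)}).toReal /
          (ℙ {ω | Y ω ∈ Ioc (y - δ) (y + δ)}).toReal)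
        (nhdsWithin 0 (Ioi 0)) (nhds (K x y))) ∧
    ∀ ε > 0, ∀ᶠ x in atTop, ∀ y, 0 ≤ y → |K x y / (h y * rvTail X x) - 1| < ε

/-- `(X, Y)` follows a Farlie–Gumbel–Morgenstern (FGM) distribution with parameter
`θ ∈ [-1, 1]`: `P(X > x, Y > y) = F̄(x) Ḡ(y) (1 + θ F(x) G(y))` for all `x` in the
support of `X` and `y` in the support of `Y`. -/
def FGM {Ω : Type*} [MeasureSpace Ω] (X Y : Ω → ℝ) (θ : ℝ) : Prop :=
  θ ∈ Icc (-1 : ℝ) 1 ∧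
    ∀ x ∈ distSupport X, ∀ y ∈ distSupport Y,
      (ℙ {ω | x < X ω ∧ y < Y ω}).toReal =
        rvTail X x * rvTail Y y * (1 + θ * rvCdf X x * rvCdf Y y)

/-- `(X, Y)` follows a bivariate Sarmanov distribution with kernels `φ₁, φ₂` and
parameter `θ`: the joint law has density `1 + θ φ₁(x) φ₂(y)` with respect to the product
of the marginal laws, where `φ₁, φ₂` are measurable, `E φ₁(X) = E φ₂(Y) = 0` and
`1 + θ φ₁(x) φ₂(y) ≥ 0`. -/
def Sarmanov {Ω : Type*} [MeasureSpace Ω] (X Y : Ω → ℝ) (φ₁ φ₂ : ℝ → ℝ) (θ : ℝ) : Prop :=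
  Measurable φ₁ ∧ Measurable φ₂ ∧
    Integrable (fun ω => φ₁ (X ω)) ℙ ∧ Integrable (fun ω => φ₂ (Y ω)) ℙ ∧
    (∫ ω, φ₁ (X ω)) = 0 ∧ (∫ ω, φ₂ (Y ω)) = 0 ∧
    (∀ x y : ℝ, 0 ≤ y → 0 ≤ 1 + θ * φ₁ x * φ₂ y) ∧
    Measure.map (fun ω => (X ω, Y ω)) ℙ =
      ((Measure.map X ℙ).prod (Measure.map Y ℙ)).withDensity
        (fun p => ENNReal.ofReal (1 + θ * φ₁ p.1 * φ₂ p.2))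

/-- The condition `ψ(y) = lim_{δ → 0+} (∫_{y-δ}^{y+δ} φ₂(v) G(dv)) / (G(y+δ) - G(y-δ))`
for all `y` in the support of `Y`. -/
def SarmanovPsi {Ω : Type*} [MeasureSpace Ω] (Y : Ω → ℝ) (φ₂ ψ : ℝ → ℝ) : Prop :=
  ∀ y ∈ distSupport Y,
    Tendsto
      (fun δ : ℝ => (∫ v in Ioc (y - δ) (y + δ), φ₂ v ∂(Measure.map Y ℙ)) /
        (rvCdf Y (y + δ) - rvCdf Y (y - δ)))
      (nhdsWithin 0 (Ioi 0)) (nhds (ψ y))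


/-- The conditional law of `X` given `Y`. -/
abbrev cd {Ω : Type*} [MeasureSpace Ω] [IsProbabilityMeasure (ℙ : Measure Ω)]
    (X Y : Ω → ℝ) : Kernel ℝ ℝ := condDistrib X Y (ℙ : Measure Ω)

lemma ae_K_eq {Ω : Type*} [MeasureSpace Ω] [IsProbabilityMeasure (ℙ : Measure Ω)]
    (X Y : Ω → ℝ) (hXm : Measurable X) (hYm : Measurable Y)
    (K : ℝ → ℝ → ℝ) (x : ℝ)
    (hK : ∀ y ∈ distSupport Y,
      Tendsto
        (fun δ : ℝ => (ℙ {ω | x < X ω ∧ Y ω ∈ Ioc (y - δ) (y + δ)}).toReal /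
          (ℙ {ω | Y ω ∈ Ioc (y - δ) (y + δ)}).toReal)
        (nhdsWithin 0 (Ioi 0)) (nhds (K x y))) :
    ∀ᵐ y ∂(Measure.map Y ℙ), K x y = (cd X Y y).real (Ioi x) := by
  set G := Measure.map Y (ℙ : Measure Ω) with hG
  have : IsProbabilityMeasure G := Measure.isProbabilityMeasure_map hYm.aemeasurable
  set ν := G.withDensity (fun y => cd X Y y (Ioi x)) with hν
  have hmeas : Measurable (fun y => cd X Y y (Ioi x)) :=
    Kernel.measurable_coe _ measurableSet_Ioi
  have hνapp : ∀ B, MeasurableSet B → ν B = ℙ {ω | x < X ω ∧ Y ω ∈ B} := by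
    intro B hB
    rw [hν, withDensity_apply _ hB, hG, setLIntegral_map hB hmeas hYm,
      setLIntegral_preimage_condDistrib hYm hXm.aemeasurable measurableSet_Ioi hB]
    congr 1
    ext ω
    simp [and_comm]
  have hGapp : ∀ B, MeasurableSet B → G B = ℙ {ω | Y ω ∈ B} := by
    intro B hB
    rw [hG, Measure.map_apply hYm hB]; rfl
  have : IsFiniteMeasure ν := ⟨by
    rw [hνapp _ MeasurableSet.univ]; exact measure_lt_top _ _⟩
  have hac : ν ≪ G := withDensity_absolutelyContinuous _ _
  have hcount : Set.Countable {a : ℝ | 0 < G {a}} :=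
    Measure.countable_meas_pos_of_disjoint_iUnion (fun i => measurableSet_singleton i)
      (fun i j hij => by simpa [Function.onFun] using hij)
  filter_upwards [Besicovitch.ae_tendsto_rnDeriv ν G, Measure.rnDeriv_withDensity G hmeas,
    Measure.support_mem_ae (μ := G)] with y h1 h2 h3
  have hsupp : y ∈ distSupport Y := by
    intro δ hδ
    rw [← hGapp _ measurableSet_Ioo]
    rw [Measure.mem_support_iff_forall] at h3
    exact h3 _ (Ioo_mem_nhds (by linarith) (by linarith))
  rw [← hν] at h2
  rw [h2] at h1
  have h4 := (ENNReal.tendsto_toReal (measure_ne_top (cd X Y y) (Ioi x))).comp h1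
  refine tendsto_nhds_unique_of_frequently_eq (hK y hsupp) h4 ?_
  -- frequently no atom at the left end
  have hc2 : Set.Countable {δ : ℝ | 0 < G {y - δ}} :=
    hcount.preimage (f := fun δ => y - δ) sub_right_injective
  have hd : Dense {δ : ℝ | 0 < G {y - δ}}ᶜ := hc2.dense_compl ℝ
  rw [frequently_iff]
  intro U hU
  rw [mem_nhdsGT_iff_exists_Ioo_subset] at hU
  obtain ⟨u, hu, hU⟩ := hU
  obtain ⟨δ, hδ, hδ2⟩ := hd.exists_mem_open isOpen_Ioo (nonempty_Ioo.2 hu)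
  refine ⟨δ, hU hδ2, ?_⟩
  have hδ0 : G {y - δ} = 0 := by simpa using hδ
  have hδν : ν {y - δ} = 0 := hac hδ0
  have e : Metric.closedBall y δ = insert (y - δ) (Ioc (y - δ) (y + δ)) := by
    rw [Real.closedBall_eq_Icc, Ioc_insert_left]
    linarith [hδ2.1]
  have e1 : G (Metric.closedBall y δ) = G (Ioc (y - δ) (y + δ)) := by
    rw [e, Set.insert_eq]
    exact measure_congr (union_ae_eq_right_of_ae_eq_empty (ae_eq_empty.2 hδ0))
  have e2 : ν (Metric.closedBall y δ) = ν (Ioc (y - δ) (y + δ)) := by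
    rw [e, Set.insert_eq]
    exact measure_congr (union_ae_eq_right_of_ae_eq_empty (ae_eq_empty.2 hδν))
  simp only [Function.comp]
  rw [e1, e2, ENNReal.toReal_div, hνapp _ measurableSet_Ioc, hGapp _ measurableSet_Ioc]

lemma rightCont (m : Measure ℝ) [IsProbabilityMeasure m] (z : ℝ) :
    Tendsto (fun x => m.real (Ioi x)) (nhdsWithin z (Ioi z)) (nhds (m.real (Ioi z))) := by
  have e : ∀ x, m.real (Ioi x) = 1 - cdf m x := by
    intro x
    rw [cdf_eq_real, ← compl_Iic, probReal_compl_eq_one_sub measurableSet_Iic]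
  simp only [e]
  exact tendsto_const_nhds.sub
    (((cdf m).right_continuous z).mono Ioi_subset_Ici_self)

lemma rvTail_eq {Ω : Type*} [MeasureSpace Ω] (X : Ω → ℝ) (hXm : Measurable X) (x : ℝ) :
    rvTail X x = (Measure.map X ℙ).real (Ioi x) := by
  rw [measureReal_def, Measure.map_apply hXm measurableSet_Ioi]; rfl

lemma rvTail_anti {Ω : Type*} [MeasureSpace Ω] [IsProbabilityMeasure (ℙ : Measure Ω)]
    (X : Ω → ℝ) : Antitone (rvTail X) := by
  intro a b hab
  refine ENNReal.toReal_mono (measure_ne_top _ _) (measure_mono ?_)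
  intro ω (hω : b < X ω)
  exact lt_of_le_of_lt hab hω

lemma rvTail_pos {Ω : Type*} [MeasureSpace Ω] [IsProbabilityMeasure (ℙ : Measure Ω)]
    {X : Ω → ℝ} (hX : UnboundedDist X) (x : ℝ) : 0 < rvTail X x :=
  lt_of_lt_of_le (hX (max x 1) (by positivity)) (rvTail_anti X (le_max_left _ _))

lemma ae_bounds {Ω : Type*} [MeasureSpace Ω] [IsProbabilityMeasure (ℙ : Measure Ω)]
    (X Y : Ω → ℝ) (hXm : Measurable X) (hYm : Measurable Y)
    (hYnonneg : ∀ ω, 0 ≤ Y ω) (hFunb : UnboundedDist X)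
    (h : ℝ → ℝ) (K : ℝ → ℝ → ℝ) (hA1 : Assumption1 X Y h K) (ε : ℝ) (hε : 0 < ε) :
    ∃ x0 : ℝ, 0 < x0 ∧ ∀ᵐ y ∂(Measure.map Y ℙ), 0 < h y ∧ ∀ z ≥ x0,
      (1 - ε) * (h y * rvTail X z) ≤ (cd X Y y).real (Ioi z) ∧
      (cd X Y y).real (Ioi z) ≤ (1 + ε) * (h y * rvTail X z) := by
  obtain ⟨hm, hpos, -, hK, hunif⟩ := hA1
  have : IsProbabilityMeasure (Measure.map X (ℙ : Measure Ω)) :=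
    Measure.isProbabilityMeasure_map hXm.aemeasurable
  obtain ⟨x0, hx0⟩ := eventually_atTop.1 (hunif ε hε)
  have hall : ∀ᵐ y ∂(Measure.map Y ℙ), ∀ q : ℚ, K q y = (cd X Y y).real (Ioi (q : ℝ)) := by
    rw [ae_all_iff]
    intro q
    exact ae_K_eq X Y hXm hYm K q (fun y hy => hK y hy q)
  have hnn : ∀ᵐ y ∂(Measure.map Y ℙ), 0 ≤ y := by
    rw [ae_map_iff hYm.aemeasurable measurableSet_Ici]
    exact Eventually.of_forall hYnonneg
  refine ⟨max x0 1, by positivity, ?_⟩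
  filter_upwards [hall, hnn] with y hy hy0
  have hhy := hpos y hy0
  refine ⟨hhy, fun z hz => ?_⟩
  have hz0 : x0 ≤ z := le_trans (le_max_left _ _) hz
  have hT := rightCont (cd X Y y) z
  have hF : Tendsto (fun x => rvTail X x) (nhdsWithin z (Ioi z)) (nhds (rvTail X z)) := by
    simp only [rvTail_eq X hXm]
    exact rightCont _ z
  have hfreq : ∃ᶠ x in nhdsWithin z (Ioi z),
      |(cd X Y y).real (Ioi x) / (h y * rvTail X x) - 1| < ε := by
    rw [frequently_iff]
    intro U hU
    rw [mem_nhdsGT_iff_exists_Ioo_subset] at hU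
    obtain ⟨u, hu, hU⟩ := hU
    obtain ⟨q, hq1, hq2⟩ := exists_rat_btwn (show z < u from hu)
    refine ⟨q, hU ⟨hq1, hq2⟩, ?_⟩
    rw [← hy q]
    exact hx0 q (by linarith) y hy0
  have hfr2 : ∃ᶠ x in nhdsWithin z (Ioi z),
      0 ≤ (cd X Y y).real (Ioi x) - (1 - ε) * (h y * rvTail X x) ∧
      0 ≤ (1 + ε) * (h y * rvTail X x) - (cd X Y y).real (Ioi x) := by
    refine hfreq.mono fun x hx => ?_
    have hp : 0 < h y * rvTail X x := mul_pos hhy (rvTail_pos hFunb x)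
    rw [abs_lt] at hx
    have h1 : 1 - ε < (cd X Y y).real (Ioi x) / (h y * rvTail X x) := by linarith
    have h2 : (cd X Y y).real (Ioi x) / (h y * rvTail X x) < 1 + ε := by linarith
    rw [lt_div_iff₀ hp] at h1
    rw [div_lt_iff₀ hp] at h2
    constructor <;> linarith
  constructor
  · have := ge_of_tendsto_of_frequently
      (hT.sub ((hF.const_mul (h y)).const_mul (1 - ε))) (hfr2.mono fun x hx => hx.1)
    linarith
  · have := ge_of_tendsto_of_frequently
      (((hF.const_mul (h y)).const_mul (1 + ε)).sub hT) (hfr2.mono fun x hx => hx.2)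
    linarith

lemma prod_formula {Ω : Type*} [MeasureSpace Ω] [IsProbabilityMeasure (ℙ : Measure Ω)]
    (X Y : Ω → ℝ) (hXm : Measurable X) (hYm : Measurable Y) (x : ℝ)
    (B : Set ℝ) (hB : MeasurableSet B) (hB0 : B ⊆ Ioi 0) :
    ℙ {ω | x < X ω * Y ω ∧ Y ω ∈ B} = ∫⁻ y in B, cd X Y y (Ioi (x / y)) ∂(Measure.map Y ℙ) := by
  have hS : MeasurableSet {p : ℝ × ℝ | x < p.2 * p.1 ∧ p.1 ∈ B} :=
    (measurableSet_lt measurable_const (measurable_snd.mul measurable_fst)).inter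
      (measurable_fst hB)
  have : IsProbabilityMeasure (Measure.map Y (ℙ : Measure Ω)) :=
    Measure.isProbabilityMeasure_map hYm.aemeasurable
  have e : ℙ {ω | x < X ω * Y ω ∧ Y ω ∈ B} =
      (Measure.map (fun ω => (Y ω, X ω)) ℙ) {p : ℝ × ℝ | x < p.2 * p.1 ∧ p.1 ∈ B} := by
    rw [Measure.map_apply (hYm.prodMk hXm) hS]; rfl
  rw [e, ← compProd_map_condDistrib hXm.aemeasurable, Measure.compProd_apply hS,
    ← lintegral_indicator hB]
  refine lintegral_congr fun y => ?_
  by_cases hy : y ∈ B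
  · rw [indicator_of_mem hy]
    congr 1
    ext z
    simp [hy, div_lt_iff₀ (show 0 < y from hB0 hy)]
  · rw [indicator_of_notMem hy]
    simp [hy]

lemma ratio_of_memL {Ω : Type*} [MeasureSpace Ω] [IsProbabilityMeasure (ℙ : Measure Ω)]
    {X : Ω → ℝ} {γ : ℝ} (hFL : MemLGamma X γ) {τ : ℝ} (hτ : 0 < τ) {ε : ℝ} (hε : 0 < ε) :
    ∀ᶠ z in atTop, rvTail X (z - τ) ≤ (Real.exp (γ * τ) + ε) * rvTail X z ∧
      (Real.exp (γ * τ) - ε) * rvTail X z ≤ rvTail X (z - τ) := by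
  have h1 := (hFL.2 τ hτ).isLittleO
  have hE := Real.exp_pos (γ * τ)
  have h2 := (isLittleO_iff.1 h1) (show 0 < ε / Real.exp (γ * τ) by positivity)
  filter_upwards [h2] with z hz
  have hp := rvTail_pos hFL.1 z
  simp only [Pi.sub_apply] at hz
  rw [Real.norm_eq_abs, Real.norm_eq_abs, abs_of_pos (mul_pos hE hp)] at hz
  have e : ε / Real.exp (γ * τ) * (Real.exp (γ * τ) * rvTail X z) = ε * rvTail X z := by
    field_simp
  rw [e, abs_le] at hz
  constructor <;> nlinarith [hz.1, hz.2]

lemma exists_small (f : ℝ → ℝ) (hf : Continuous f) (h0 : f 0 < 0) :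
    ∃ ε : ℝ, 0 < ε ∧ ε < 1 ∧ f ε < 0 := by
  have h1 : ∀ᶠ e in nhdsWithin (0 : ℝ) (Ioi 0), f e < 0 :=
    (hf.continuousAt.eventually_lt continuousAt_const h0).filter_mono nhdsWithin_le_nhds
  have h2 : ∀ᶠ e in nhdsWithin (0 : ℝ) (Ioi 0), e ∈ Ioo (0 : ℝ) 1 :=
    Ioo_mem_nhdsGT one_pos
  obtain ⟨e, he1, he2⟩ := (h1.and h2).exists
  exact ⟨e, he2.1, he2.2, he1⟩

lemma real_le_to_ennreal (m : Measure ℝ) [IsProbabilityMeasure m] {A B : Set ℝ} {C : ℝ}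
    (hC : 0 ≤ C) (hh : m.real A ≤ C * m.real B) : m A ≤ ENNReal.ofReal C * m B := by
  rw [← ofReal_measureReal (μ := m) (s := A), ← ofReal_measureReal (μ := m) (s := B),
    ← ENNReal.ofReal_mul hC]
  exact ENNReal.ofReal_le_ofReal hh

lemma ratio_upper {Ω : Type*} [MeasureSpace Ω] [IsProbabilityMeasure (ℙ : Measure Ω)]
    (X Y : Ω → ℝ) (hXm : Measurable X) (hYm : Measurable Y)
    (hYnonneg : ∀ ω, 0 ≤ Y ω) (hFunb : UnboundedDist X)
    (h : ℝ → ℝ) (K : ℝ → ℝ → ℝ) (hA1 : Assumption1 X Y h K)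
    (γ : ℝ) (hFL : MemLGamma X γ) (τ : ℝ) (hτ : 0 < τ) (C : ℝ) (hC : Real.exp (γ * τ) < C) :
    ∃ x0 : ℝ, 0 < x0 ∧ ∀ᵐ y ∂(Measure.map Y ℙ), ∀ z ≥ x0,
      cd X Y y (Ioi (z - τ)) ≤ ENNReal.ofReal C * cd X Y y (Ioi z) := by
  have hC0 : 0 < C := (Real.exp_pos _).trans hC
  obtain ⟨ε, hε0, hε1, hε⟩ := exists_small
    (fun e => (1 + e) * (Real.exp (γ * τ) + e) - C * (1 - e)) (by fun_prop) (by simp; exact hC)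
  obtain ⟨x1, hx1, hb⟩ := ae_bounds X Y hXm hYm hYnonneg hFunb h K hA1 ε hε0
  obtain ⟨x2, hx2⟩ := eventually_atTop.1 (ratio_of_memL hFL hτ hε0)
  refine ⟨max (x1 + τ) x2, by positivity, ?_⟩
  filter_upwards [hb] with y ⟨hy, hyb⟩ z hz
  have hz1 : x1 + τ ≤ z := (le_max_left _ _).trans hz
  have hz2 : x2 ≤ z := (le_max_right _ _).trans hz
  refine real_le_to_ennreal _ hC0.le ?_
  have b1 := (hyb (z - τ) (by linarith)).2
  have b2 := (hyb z (by linarith)).1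
  have b3 := (hx2 z hz2).1
  have hp := rvTail_pos hFunb z
  calc (cd X Y y).real (Ioi (z - τ)) ≤ (1 + ε) * (h y * rvTail X (z - τ)) := b1
    _ ≤ (1 + ε) * (h y * ((Real.exp (γ * τ) + ε) * rvTail X z)) := by gcongr
    _ = ((1 + ε) * (Real.exp (γ * τ) + ε)) * (h y * rvTail X z) := by ring
    _ ≤ (C * (1 - ε)) * (h y * rvTail X z) := by
        have : 0 ≤ h y * rvTail X z := by positivity
        exact mul_le_mul_of_nonneg_right (by linarith) this
    _ = C * ((1 - ε) * (h y * rvTail X z)) := by ring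
    _ ≤ _ := by gcongr

lemma ratio_lower {Ω : Type*} [MeasureSpace Ω] [IsProbabilityMeasure (ℙ : Measure Ω)]
    (X Y : Ω → ℝ) (hXm : Measurable X) (hYm : Measurable Y)
    (hYnonneg : ∀ ω, 0 ≤ Y ω) (hFunb : UnboundedDist X)
    (h : ℝ → ℝ) (K : ℝ → ℝ → ℝ) (hA1 : Assumption1 X Y h K)
    (γ : ℝ) (hFL : MemLGamma X γ) (τ : ℝ) (hτ : 0 < τ) (c : ℝ) (hc0 : 0 < c)
    (hc : c < Real.exp (γ * τ)) :
    ∃ x0 : ℝ, 0 < x0 ∧ ∀ᵐ y ∂(Measure.map Y ℙ), ∀ z ≥ x0,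
      cd X Y y (Ioi z) ≤ ENNReal.ofReal c⁻¹ * cd X Y y (Ioi (z - τ)) := by
  obtain ⟨ε, hε0, hε1, hε⟩ := exists_small
    (fun e => c * (1 + e) - (1 - e) * (Real.exp (γ * τ) - e)) (by fun_prop) (by simp; exact hc)
  obtain ⟨x1, hx1, hb⟩ := ae_bounds X Y hXm hYm hYnonneg hFunb h K hA1 ε hε0
  obtain ⟨x2, hx2⟩ := eventually_atTop.1 (ratio_of_memL hFL hτ hε0)
  refine ⟨max (x1 + τ) x2, by positivity, ?_⟩
  filter_upwards [hb] with y ⟨hy, hyb⟩ z hz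
  have hz1 : x1 + τ ≤ z := (le_max_left _ _).trans hz
  have hz2 : x2 ≤ z := (le_max_right _ _).trans hz
  refine real_le_to_ennreal _ (by positivity) ?_
  have b1 := (hyb (z - τ) (by linarith)).1
  have b2 := (hyb z (by linarith)).2
  have b3 := (hx2 z hz2).2
  have hp := rvTail_pos hFunb z
  rw [inv_mul_eq_div, le_div_iff₀ hc0, mul_comm]
  have h1e : 0 ≤ 1 - ε := by linarith
  calc c * (cd X Y y).real (Ioi z) ≤ c * ((1 + ε) * (h y * rvTail X z)) := by gcongr
    _ = (c * (1 + ε)) * (h y * rvTail X z) := by ring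
    _ ≤ ((1 - ε) * (Real.exp (γ * τ) - ε)) * (h y * rvTail X z) := by
        have : 0 ≤ h y * rvTail X z := by positivity
        exact mul_le_mul_of_nonneg_right (by linarith) this
    _ = (1 - ε) * (h y * ((Real.exp (γ * τ) - ε) * rvTail X z)) := by ring
    _ ≤ (1 - ε) * (h y * rvTail X (z - τ)) := by gcongr
    _ ≤ _ := b1

lemma upper_piece {Ω : Type*} [MeasureSpace Ω] [IsProbabilityMeasure (ℙ : Measure Ω)]
    (X Y : Ω → ℝ) (hXm : Measurable X) (hYm : Measurable Y)
    (hYnonneg : ∀ ω, 0 ≤ Y ω) (hFunb : UnboundedDist X)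
    (h : ℝ → ℝ) (K : ℝ → ℝ → ℝ) (hA1 : Assumption1 X Y h K)
    (γ : ℝ) (hFL : MemLGamma X γ) (t a : ℝ) (ht : 0 < t) (ha : 0 < a) (C : ℝ)
    (hC : Real.exp (γ * (t / a)) < C) :
    ∃ x0 : ℝ, 0 < x0 ∧ ∀ x, ℙ {ω | x - t < X ω * Y ω ∧ Y ω ∈ Ioc a (x / x0)} ≤
      ENNReal.ofReal C * ℙ {ω | x < X ω * Y ω} := by
  obtain ⟨x0, hx0, hb⟩ := ratio_upper X Y hXm hYm hYnonneg hFunb h K hA1 γ hFL (t / a)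
    (by positivity) C hC
  refine ⟨x0, hx0, fun x => ?_⟩
  have hsub : Ioc a (x / x0) ⊆ Ioi 0 := fun y hy => ha.trans hy.1
  calc ℙ {ω | x - t < X ω * Y ω ∧ Y ω ∈ Ioc a (x / x0)}
      = ∫⁻ y in Ioc a (x / x0), cd X Y y (Ioi ((x - t) / y)) ∂(Measure.map Y ℙ) :=
        prod_formula X Y hXm hYm _ _ measurableSet_Ioc hsub
    _ ≤ ∫⁻ y in Ioc a (x / x0), ENNReal.ofReal C * cd X Y y (Ioi (x / y)) ∂(Measure.map Y ℙ) := by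
        refine setLIntegral_mono_ae' measurableSet_Ioc ?_
        filter_upwards [hb] with y hy hya
        have hy0 : 0 < y := hsub hya
        refine le_trans (measure_mono (Ioi_subset_Ioi ?_)) (hy (x / y) ?_)
        · rw [sub_div]
          have : t / y ≤ t / a := by
            have := hya.1.le
            gcongr
          linarith
        · have := hya.2
          rw [le_div_iff₀ hx0] at this
          rw [ge_iff_le, le_div_iff₀ hy0]; linarith
    _ = ENNReal.ofReal C * ∫⁻ y in Ioc a (x / x0), cd X Y y (Ioi (x / y)) ∂(Measure.map Y ℙ) :=
        lintegral_const_mul' _ _ ENNReal.ofReal_ne_top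
    _ = ENNReal.ofReal C * ℙ {ω | x < X ω * Y ω ∧ Y ω ∈ Ioc a (x / x0)} := by
        rw [prod_formula X Y hXm hYm _ _ measurableSet_Ioc hsub]
    _ ≤ _ := by
        gcongr
        exact fun hh => hh.1

lemma lower_piece {Ω : Type*} [MeasureSpace Ω] [IsProbabilityMeasure (ℙ : Measure Ω)]
    (X Y : Ω → ℝ) (hXm : Measurable X) (hYm : Measurable Y)
    (hYnonneg : ∀ ω, 0 ≤ Y ω) (hFunb : UnboundedDist X)
    (h : ℝ → ℝ) (K : ℝ → ℝ → ℝ) (hA1 : Assumption1 X Y h K)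
    (γ : ℝ) (hFL : MemLGamma X γ) (t β : ℝ) (ht : 0 < t) (hβ : 0 < β)
    (hYβ : ∀ᵐ y ∂(Measure.map Y ℙ), y ≤ β) (c : ℝ) (hc0 : 0 < c)
    (hc : c < Real.exp (γ * (t / β))) :
    ∃ x0 : ℝ, 0 < x0 ∧ ∀ x, ℙ {ω | x < X ω * Y ω ∧ Y ω ∈ Ioc 0 (x / x0)} ≤
      ENNReal.ofReal c⁻¹ * ℙ {ω | x - t < X ω * Y ω} := by
  obtain ⟨x0, hx0, hb⟩ := ratio_lower X Y hXm hYm hYnonneg hFunb h K hA1 γ hFL (t / β)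
    (by positivity) c hc0 hc
  refine ⟨x0, hx0, fun x => ?_⟩
  have hsub : Ioc 0 (x / x0) ⊆ Ioi 0 := fun y hy => hy.1
  calc ℙ {ω | x < X ω * Y ω ∧ Y ω ∈ Ioc 0 (x / x0)}
      = ∫⁻ y in Ioc 0 (x / x0), cd X Y y (Ioi (x / y)) ∂(Measure.map Y ℙ) :=
        prod_formula X Y hXm hYm _ _ measurableSet_Ioc hsub
    _ ≤ ∫⁻ y in Ioc 0 (x / x0), ENNReal.ofReal c⁻¹ * cd X Y y (Ioi ((x - t) / y))
          ∂(Measure.map Y ℙ) := by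
        refine setLIntegral_mono_ae' measurableSet_Ioc ?_
        filter_upwards [hb, hYβ] with y hy hyβ hya
        have hy0 : 0 < y := hsub hya
        refine le_trans (hy (x / y) ?_) ?_
        · have := hya.2
          rw [le_div_iff₀ hx0] at this
          rw [ge_iff_le, le_div_iff₀ hy0]; linarith
        · gcongr
          rw [sub_div]
          gcongr
    _ = ENNReal.ofReal c⁻¹ * ∫⁻ y in Ioc 0 (x / x0), cd X Y y (Ioi ((x - t) / y))
          ∂(Measure.map Y ℙ) :=
        lintegral_const_mul' _ _ ENNReal.ofReal_ne_top
    _ = ENNReal.ofReal c⁻¹ * ℙ {ω | x - t < X ω * Y ω ∧ Y ω ∈ Ioc 0 (x / x0)} := by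
        rw [prod_formula X Y hXm hYm _ _ measurableSet_Ioc hsub]
    _ ≤ _ := by
        gcongr
        exact fun hh => hh.1

lemma small_bound {Ω : Type*} [MeasureSpace Ω] [IsProbabilityMeasure (ℙ : Measure Ω)]
    (X Y : Ω → ℝ) (hXm : Measurable X) (hYm : Measurable Y)
    (hYnonneg : ∀ ω, 0 ≤ Y ω) (hFunb : UnboundedDist X)
    (h : ℝ → ℝ) (K : ℝ → ℝ → ℝ) (hA1 : Assumption1 X Y h K) :
    ∃ M x0 : ℝ, 0 < M ∧ 0 < x0 ∧ ∀ a > 0, ∀ w ≥ a * x0,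
      (ℙ {ω | w < X ω * Y ω ∧ Y ω ∈ Ioc 0 a}).toReal ≤
        M * rvTail X (w / a) * (rvTail Y 0 - rvTail Y a) := by
  obtain ⟨x0, hx0, hb⟩ := ae_bounds X Y hXm hYm hYnonneg hFunb h K hA1 (1 / 2) (by norm_num)
  have : IsProbabilityMeasure (Measure.map Y (ℙ : Measure Ω)) :=
    Measure.isProbabilityMeasure_map hYm.aemeasurable
  have hp0 := rvTail_pos hFunb x0
  refine ⟨3 / rvTail X x0, x0, by positivity, hx0, fun a ha w hw => ?_⟩
  have hG : rvTail Y 0 - rvTail Y a = (Measure.map Y ℙ).real (Ioc 0 a) := by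
    rw [rvTail_eq Y hYm, rvTail_eq Y hYm, ← Ioi_sdiff_Ioi,
      measureReal_sdiff (Ioi_subset_Ioi ha.le) measurableSet_Ioi]
  rw [hG]
  have hp := rvTail_pos hFunb (w / a)
  have key : ℙ {ω | w < X ω * Y ω ∧ Y ω ∈ Ioc 0 a} ≤
      ENNReal.ofReal (3 / rvTail X x0 * rvTail X (w / a)) * (Measure.map Y ℙ) (Ioc 0 a) := by
    rw [prod_formula X Y hXm hYm _ _ measurableSet_Ioc (fun y hy => hy.1), ← setLIntegral_const]
    refine setLIntegral_mono_ae' measurableSet_Ioc ?_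
    filter_upwards [hb] with y ⟨hy, hyb⟩ hya
    have hy0 : 0 < y := hya.1
    have hw0 : 0 ≤ w := by have := mul_pos ha hx0; linarith
    have hwa : x0 ≤ w / a := by rw [le_div_iff₀ ha]; linarith
    have b1 := (hyb x0 le_rfl).1
    have b2 := (hyb (w / a) hwa).2
    have b3 : (cd X Y y).real (Ioi x0) ≤ 1 := measureReal_le_one
    have b4 : h y ≤ 2 / rvTail X x0 := by
      rw [le_div_iff₀ hp0]; linarith
    refine le_trans (measure_mono (Ioi_subset_Ioi (show w / a ≤ w / y from ?_))) ?_
    · have := hya.2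
      gcongr
    · rw [← ofReal_measureReal (μ := cd X Y y)]
      refine ENNReal.ofReal_le_ofReal (b2.trans ?_)
      calc (1 + 1 / 2) * (h y * rvTail X (w / a))
          ≤ (1 + 1 / 2) * (2 / rvTail X x0 * rvTail X (w / a)) := by gcongr
        _ = _ := by ring
  have := ENNReal.toReal_mono (by finiteness) key
  rwa [ENNReal.toReal_mul, ENNReal.toReal_ofReal (by positivity)] at this

lemma big_bound {Ω : Type*} [MeasureSpace Ω] [IsProbabilityMeasure (ℙ : Measure Ω)]
    (X Y : Ω → ℝ) (hXm : Measurable X) (hYm : Measurable Y)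
    (hYnonneg : ∀ ω, 0 ≤ Y ω) (hFunb : UnboundedDist X)
    (h : ℝ → ℝ) (K : ℝ → ℝ → ℝ) (hA1 : Assumption1 X Y h K) (a : ℝ) (ha : 0 < a)
    (hYa : 0 < rvTail Y a) :
    ∃ c x0 : ℝ, 0 < c ∧ 0 < x0 ∧ ∀ w ≥ a * x0,
      c * rvTail X (w / a) ≤ rvTail (fun ω => X ω * Y ω) w := by
  obtain ⟨x0, hx0, hb⟩ := ae_bounds X Y hXm hYm hYnonneg hFunb h K hA1 (1 / 2) (by norm_num)
  have : IsProbabilityMeasure (Measure.map Y (ℙ : Measure Ω)) :=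
    Measure.isProbabilityMeasure_map hYm.aemeasurable
  have hm := hA1.1
  have hI : 0 < ∫⁻ y in Ioi a, ENNReal.ofReal (h y / 2) ∂(Measure.map Y ℙ) := by
    rw [setLIntegral_pos_iff (by fun_prop)]
    have : (Measure.map Y (ℙ : Measure Ω)) (Ioi a) ≤ (Measure.map Y ℙ)
        (Function.support (fun y => ENNReal.ofReal (h y / 2)) ∩ Ioi a) := by
      refine measure_mono_ae ?_
      filter_upwards [hb] with y ⟨hy, _⟩ hya
      refine ⟨?_, hya⟩
      have : 0 < ENNReal.ofReal (h y / 2) := ENNReal.ofReal_pos.2 (by positivity)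
      exact this.ne'
    refine lt_of_lt_of_le ?_ this
    rw [rvTail_eq Y hYm] at hYa
    exact (ENNReal.toReal_pos_iff.1 hYa).1
  obtain ⟨c, hc0, hcI⟩ := ENNReal.lt_iff_exists_nnreal_btwn.1 hI
  refine ⟨c, x0, by exact_mod_cast hc0, hx0, fun w hw => ?_⟩
  have hp := rvTail_pos hFunb (w / a)
  have key : ENNReal.ofReal (rvTail X (w / a)) * c ≤ ℙ {ω | w < X ω * Y ω} := by
    calc ENNReal.ofReal (rvTail X (w / a)) * c
        ≤ ENNReal.ofReal (rvTail X (w / a)) *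
          ∫⁻ y in Ioi a, ENNReal.ofReal (h y / 2) ∂(Measure.map Y ℙ) := by gcongr
      _ = ∫⁻ y in Ioi a, ENNReal.ofReal (rvTail X (w / a)) * ENNReal.ofReal (h y / 2)
          ∂(Measure.map Y ℙ) := (lintegral_const_mul' _ _ ENNReal.ofReal_ne_top).symm
      _ ≤ ∫⁻ y in Ioi a, cd X Y y (Ioi (w / y)) ∂(Measure.map Y ℙ) := by
          refine setLIntegral_mono_ae' measurableSet_Ioi ?_
          filter_upwards [hb] with y ⟨hy, hyb⟩ hya
          have hya' : a ≤ y := le_of_lt hya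
          have hw0 : 0 ≤ w := by have := mul_pos ha hx0; linarith
          have hwa : x0 ≤ w / a := by rw [le_div_iff₀ ha]; linarith
          have b1 := (hyb (w / a) hwa).1
          refine le_trans ?_ (measure_mono (Ioi_subset_Ioi (show w / y ≤ w / a by gcongr)))
          rw [← ofReal_measureReal (μ := cd X Y y), ← ENNReal.ofReal_mul hp.le]
          refine ENNReal.ofReal_le_ofReal ?_
          linarith
      _ = ℙ {ω | w < X ω * Y ω ∧ Y ω ∈ Ioi a} :=
          (prod_formula X Y hXm hYm _ _ measurableSet_Ioi
            (fun y hy => ha.trans hy)).symm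
      _ ≤ _ := by
          gcongr
          exact fun hh => hh.1
  have := ENNReal.toReal_mono (by finiteness) key
  rw [ENNReal.toReal_mul, ENNReal.toReal_ofReal hp.le, mul_comm] at this
  exact this

lemma tail_right {Ω : Type*} [MeasureSpace Ω] [IsProbabilityMeasure (ℙ : Measure Ω)]
    (Y : Ω → ℝ) (hYm : Measurable Y) (z : ℝ) :
    Tendsto (rvTail Y) (nhdsWithin z (Ioi z)) (nhds (rvTail Y z)) := by
  have : IsProbabilityMeasure (Measure.map Y (ℙ : Measure Ω)) :=
    Measure.isProbabilityMeasure_map hYm.aemeasurable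
  have e : rvTail Y = fun x => (Measure.map Y ℙ).real (Ioi x) := funext (rvTail_eq Y hYm)
  rw [e]
  exact rightCont _ z

lemma exists_gt_tail {Ω : Type*} [MeasureSpace Ω] [IsProbabilityMeasure (ℙ : Measure Ω)]
    (Y : Ω → ℝ) (hYm : Measurable Y) (z : ℝ) (hz : 0 < rvTail Y z) :
    ∃ a, z < a ∧ 0 < rvTail Y a := by
  have h1 := (tail_right Y hYm z).eventually_const_lt hz
  obtain ⟨a, ha1, ha2⟩ := (h1.and self_mem_nhdsWithin).exists
  exact ⟨a, ha2, ha1⟩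

lemma tail_zero_pos {Ω : Type*} [MeasureSpace Ω] [IsProbabilityMeasure (ℙ : Measure Ω)]
    (Y : Ω → ℝ) (hYm : Measurable Y) (hYnonneg : ∀ ω, 0 ≤ Y ω)
    (hYnd : ℙ {ω | Y ω = 0} ≠ 1) : 0 < rvTail Y 0 := by
  by_contra hcon
  have h0 : rvTail Y 0 = 0 := le_antisymm (not_lt.1 hcon) ENNReal.toReal_nonneg
  have h1 : ℙ {ω | 0 < Y ω} = 0 := by
    rcases (ENNReal.toReal_eq_zero_iff _).1 h0 with h | h
    · exact h
    · exact absurd h (measure_ne_top _ _)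
  apply hYnd
  have hms : MeasurableSet {ω | 0 < Y ω} := measurableSet_lt measurable_const hYm
  have := prob_compl_eq_one_sub (μ := (ℙ : Measure Ω)) hms
  rw [h1, tsub_zero] at this
  rw [← this]
  congr 1
  ext ω
  have := hYnonneg ω
  simp only [mem_ofPred_eq, mem_compl_iff, not_lt]
  constructor <;> intro <;> linarith

lemma small_piece {Ω : Type*} [MeasureSpace Ω] [IsProbabilityMeasure (ℙ : Measure Ω)]
    (X Y : Ω → ℝ) (hXm : Measurable X) (hYm : Measurable Y)
    (hYnonneg : ∀ ω, 0 ≤ Y ω) (hFunb : UnboundedDist X)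
    (hYnd : ℙ {ω | Y ω = 0} ≠ 1)
    (h : ℝ → ℝ) (K : ℝ → ℝ → ℝ) (hA1 : Assumption1 X Y h K)
    (γ : ℝ) (hγ : 0 ≤ γ) (hFL : MemLGamma X γ) (t : ℝ) (η : ℝ) (hη : 0 < η) :
    ∃ a > 0, γ / a ≤ gammaOverBeta Y γ + η ∧
      ∀ᶠ x in atTop, (ℙ {ω | x - t < X ω * Y ω ∧ Y ω ∈ Ioc 0 a}).toReal ≤
        η * rvTail (fun ω => X ω * Y ω) x := by
  obtain ⟨M, x0, hM, hx0, hsm⟩ := small_bound X Y hXm hYm hYnonneg hFunb h K hA1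
  have hY0 := tail_zero_pos Y hYm hYnonneg hYnd
  -- combine: it is enough to have the comparison of tails of `X`
  have main : ∀ a > 0, ∀ a' > a, 0 < rvTail Y a' → (∀ δ > 0, ∃ ρ : ℝ, 0 ≤ ρ ∧
      ρ * (rvTail Y 0 - rvTail Y a) ≤ δ ∧
      ∀ᶠ x in atTop, rvTail X ((x - t) / a) ≤ ρ * rvTail X (x / a')) →
      ∀ᶠ x in atTop, (ℙ {ω | x - t < X ω * Y ω ∧ Y ω ∈ Ioc 0 a}).toReal ≤
        η * rvTail (fun ω => X ω * Y ω) x := by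
    intro a ha a' ha' hYa' hcomp
    obtain ⟨c, x1, hc, hx1, hbig⟩ := big_bound X Y hXm hYm hYnonneg hFunb h K hA1 a'
      (ha.trans ha') hYa'
    obtain ⟨ρ, hρ0, hρ, hev⟩ := hcomp (η * c / M) (by positivity)
    filter_upwards [hev, eventually_ge_atTop (a * x0 + t), eventually_ge_atTop (a' * x1)]
      with x hx hxa hxa'
    have s1 := hsm a ha (x - t) (by linarith)
    have s2 := hbig x hxa'
    have hp := rvTail_pos hFunb (x / a')
    have hd : 0 ≤ rvTail Y 0 - rvTail Y a := sub_nonneg.2 (rvTail_anti Y ha.le)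
    calc _ ≤ M * rvTail X ((x - t) / a) * (rvTail Y 0 - rvTail Y a) := s1
      _ ≤ M * (ρ * rvTail X (x / a')) * (rvTail Y 0 - rvTail Y a) := by gcongr
      _ = M * (ρ * (rvTail Y 0 - rvTail Y a)) * rvTail X (x / a') := by ring
      _ ≤ M * (η * c / M) * rvTail X (x / a') := by gcongr
      _ = η * (c * rvTail X (x / a')) := by field_simp
      _ ≤ _ := by gcongr
  have hlin : ∀ a > 0, ∀ a' > a, ∀ n : ℝ, ∀ᶠ x in atTop, x / a' + n ≤ (x - t) / a := by
    intro a ha a' ha' n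
    have hpos : 0 < 1 / a - 1 / a' := sub_pos.2 (one_div_lt_one_div_of_lt ha ha')
    filter_upwards [eventually_ge_atTop ((n + t / a) / (1 / a - 1 / a'))] with x hx
    rw [div_le_iff₀ hpos] at hx
    rw [sub_div]
    have : x * (1 / a - 1 / a') = x / a - x / a' := by ring
    linarith
  rcases hγ.eq_or_lt with hγ0 | hγ0
  · -- `γ = 0`
    subst hγ0
    have hs : gammaOverBeta Y 0 = 0 := by unfold gammaOverBeta; split_ifs <;> simp
    obtain ⟨a', ha', hYa'⟩ := exists_gt_tail Y hYm 0 hY0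
    obtain ⟨c, x1, hc, hx1, hbig⟩ := big_bound X Y hXm hYm hYnonneg hFunb h K hA1 a' ha' hYa'
    have hT := tail_right Y hYm 0
    have hT2 : ∀ᶠ a in nhdsWithin (0 : ℝ) (Ioi 0), rvTail Y 0 - η * c / M < rvTail Y a := 
      hT.eventually_const_lt (by have : 0 < η * c / M := by positivity
                                 linarith)
    have hT3 : ∀ᶠ a in nhdsWithin (0 : ℝ) (Ioi 0), a ∈ Ioo (0 : ℝ) a' := Ioo_mem_nhdsGT ha'
    obtain ⟨a, ha1, ha2⟩ := (hT2.and hT3).exists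
    refine ⟨a, ha2.1, by rw [hs]; simp [hη.le], ?_⟩
    have ha := ha2.1
    filter_upwards [hlin a ha2.1 a' ha2.2 0, eventually_ge_atTop (a * x0 + t),
      eventually_ge_atTop (a' * x1)] with x hx hxa hxa'
    have s1 := hsm a ha (x - t) (by linarith)
    have s2 := hbig x hxa'
    have hp := rvTail_pos hFunb (x / a')
    have hd : 0 ≤ rvTail Y 0 - rvTail Y a := sub_nonneg.2 (rvTail_anti Y ha.le)
    have hX : rvTail X ((x - t) / a) ≤ rvTail X (x / a') := rvTail_anti X (by linarith)
    calc _ ≤ M * rvTail X ((x - t) / a) * (rvTail Y 0 - rvTail Y a) := s1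
      _ ≤ M * rvTail X (x / a') * (η * c / M) := by
          gcongr
          linarith
      _ = η * (c * rvTail X (x / a')) := by field_simp
      _ ≤ _ := by gcongr
  · -- `γ > 0`
    have hex : ∃ a > 0, 0 < rvTail Y a ∧ γ / a ≤ gammaOverBeta Y γ + η := by
      obtain ⟨b, hb, hYb⟩ := exists_gt_tail Y hYm 0 hY0
      unfold gammaOverBeta
      split_ifs with hbdd
      · set β := sSup {y : ℝ | 0 < rvTail Y y} with hβ
        have hβ0 : 0 < β := lt_of_lt_of_le hb (le_csSup hbdd hYb)
        have hlt : γ / (γ / β + η) < β := by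
          rw [div_lt_iff₀ (by positivity)]
          have : β * (γ / β + η) = γ + β * η := by field_simp
          have := mul_pos hβ0 hη
          linarith
        obtain ⟨a, haS, ha⟩ := exists_lt_of_lt_csSup ⟨b, hYb⟩ hlt
        have h0 : 0 < γ / (γ / β + η) := by positivity
        have ha0 : 0 < a := h0.trans ha
        refine ⟨a, ha0, haS, ?_⟩
        rw [div_lt_iff₀ (by positivity)] at ha
        rw [div_le_iff₀ ha0]
        linarith
      · rw [not_bddAbove_iff] at hbdd
        obtain ⟨a, haS, ha⟩ := hbdd (γ / η)
        have h0 : 0 < γ / η := by positivity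
        have ha0 : 0 < a := h0.trans ha
        refine ⟨a, ha0, haS, ?_⟩
        rw [div_lt_iff₀ hη] at ha
        rw [div_le_iff₀ ha0]
        linarith
    obtain ⟨a, ha, hYa, hγa⟩ := hex
    refine ⟨a, ha, hγa, ?_⟩
    obtain ⟨a', ha', hYa'⟩ := exists_gt_tail Y hYm a hYa
    have ha'0 : 0 < a' := ha.trans ha'
    refine main a ha a' ha' hYa' fun δ hδ => ⟨δ, hδ.le, ?_, ?_⟩
    · have h1 : rvTail Y 0 ≤ 1 := by
        unfold rvTail
        exact ENNReal.toReal_le_of_le_ofReal one_pos.le (by simpa using prob_le_one)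
      have h2 : rvTail Y 0 - rvTail Y a ≤ 1 := by linarith
      nlinarith
    · set n := 1 / (δ * γ) + 1 / γ with hn
      have hn0 : 0 < n := by positivity
      have hexp : 1 / δ + 1 ≤ Real.exp (γ * n) - 1 := by
        have := Real.add_one_le_exp (γ * n)
        have e : γ * n = 1 / δ + 1 := by rw [hn]; field_simp
        rw [e] at this ⊢
        linarith
      have hr := ratio_of_memL hFL hn0 one_pos
      have hlim : Tendsto (fun x : ℝ => x / a' + n) atTop atTop :=
        tendsto_atTop_add_const_right _ _ (tendsto_id.atTop_div_const ha'0)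
      filter_upwards [hlim.eventually hr, hlin a ha a' ha' n] with x hx hx2
      have h1 := hx.2
      rw [add_sub_cancel_right] at h1
      have h2 : rvTail X ((x - t) / a) ≤ rvTail X (x / a' + n) := rvTail_anti X hx2
      have hp := rvTail_pos hFunb (x / a' + n)
      have h3 : 1 / δ * rvTail X (x / a' + n) ≤ rvTail X (x / a') := by nlinarith
      rw [one_div_mul_eq_div, div_le_iff₀ hδ] at h3
      linarith

lemma memL_upper {Ω : Type*} [MeasureSpace Ω] [IsProbabilityMeasure (ℙ : Measure Ω)]
    (X Y : Ω → ℝ) (hXm : Measurable X) (hYm : Measurable Y)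
    (hYnonneg : ∀ ω, 0 ≤ Y ω) (hFunb : UnboundedDist X)
    (hYnd : ℙ {ω | Y ω = 0} ≠ 1)
    (h : ℝ → ℝ) (K : ℝ → ℝ → ℝ) (hA1 : Assumption1 X Y h K) (hA2 : Assumption2 X Y)
    (γ : ℝ) (hγ : 0 ≤ γ) (hFL : MemLGamma X γ) (t : ℝ) (ht : 0 < t) (ε : ℝ) (hε : 0 < ε) :
    ∀ᶠ x in atTop, rvTail (fun ω => X ω * Y ω) (x - t) ≤
      (Real.exp (gammaOverBeta Y γ * t) + ε) * rvTail (fun ω => X ω * Y ω) x := by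
  set s := gammaOverBeta Y γ with hs
  obtain ⟨η, hη, -, hηε⟩ := exists_small
    (fun e => Real.exp ((s + e) * t) + 3 * e - (Real.exp (s * t) + ε)) (by fun_prop)
    (by simpa using hε)
  obtain ⟨a, ha, hγa, hsm⟩ := small_piece X Y hXm hYm hYnonneg hFunb hYnd h K hA1 γ hγ hFL t η hη
  have hE : Real.exp (γ * (t / a)) ≤ Real.exp ((s + η) * t) := by
    apply Real.exp_le_exp.2
    have : γ * (t / a) = γ / a * t := by ring
    rw [this]
    gcongr
  have hE0 := Real.exp_pos ((s + η) * t)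
  obtain ⟨x0, hx0, hup⟩ := upper_piece X Y hXm hYm hYnonneg hFunb h K hA1 γ hFL t a ht ha
    (Real.exp ((s + η) * t) + η) (by linarith)
  have h2 := (isLittleO_iff.1 (hA2 x0⁻¹ (by positivity))) hη
  filter_upwards [hsm, h2, eventually_gt_atTop t] with x h1 h2 hxt
  have hH : 0 ≤ rvTail (fun ω => X ω * Y ω) x := ENNReal.toReal_nonneg
  have h3 := ENNReal.toReal_mono (by finiteness) (hup x)
  rw [ENNReal.toReal_mul, ENNReal.toReal_ofReal (by positivity)] at h3
  change _ ≤ _ * rvTail (fun ω => X ω * Y ω) x at h3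
  rw [Real.norm_of_nonneg hH, Real.norm_of_nonneg (show 0 ≤ rvTail Y (x0⁻¹ * x) from ENNReal.toReal_nonneg),
    inv_mul_eq_div] at h2
  have hcov : {ω | x - t < X ω * Y ω} ⊆ ({ω | x - t < X ω * Y ω ∧ Y ω ∈ Ioc 0 a} ∪
      {ω | x - t < X ω * Y ω ∧ Y ω ∈ Ioc a (x / x0)}) ∪ {ω | x / x0 < Y ω} := by
    intro ω (hω : x - t < X ω * Y ω)
    have hY : 0 < Y ω := by
      rcases (hYnonneg ω).eq_or_lt with h0 | h0
      · rw [← h0] at hω; linarith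
      · exact h0
    by_cases c1 : Y ω ≤ a
    · exact Or.inl (Or.inl ⟨hω, hY, c1⟩)
    by_cases c2 : Y ω ≤ x / x0
    · exact Or.inl (Or.inr ⟨hω, not_le.1 c1, c2⟩)
    · exact Or.inr (not_le.1 c2)
  have h4 : rvTail (fun ω => X ω * Y ω) (x - t) ≤
      (ℙ {ω | x - t < X ω * Y ω ∧ Y ω ∈ Ioc 0 a}).toReal +
      (ℙ {ω | x - t < X ω * Y ω ∧ Y ω ∈ Ioc a (x / x0)}).toReal + rvTail Y (x / x0) := by
    refine (measureReal_mono (μ := (ℙ : Measure Ω)) hcov).trans ?_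
    refine (measureReal_union_le _ _).trans ?_
    exact add_le_add (measureReal_union_le _ _) le_rfl
  nlinarith

lemma memL_lower {Ω : Type*} [MeasureSpace Ω] [IsProbabilityMeasure (ℙ : Measure Ω)]
    (X Y : Ω → ℝ) (hXm : Measurable X) (hYm : Measurable Y)
    (hYnonneg : ∀ ω, 0 ≤ Y ω) (hFunb : UnboundedDist X)
    (hYnd : ℙ {ω | Y ω = 0} ≠ 1)
    (h : ℝ → ℝ) (K : ℝ → ℝ → ℝ) (hA1 : Assumption1 X Y h K) (hA2 : Assumption2 X Y)
    (γ : ℝ) (hγ : 0 ≤ γ) (hFL : MemLGamma X γ) (t : ℝ) (ht : 0 < t) (ε : ℝ) (hε : 0 < ε) :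
    ∀ᶠ x in atTop, (Real.exp (gammaOverBeta Y γ * t) - ε) * rvTail (fun ω => X ω * Y ω) x ≤
      rvTail (fun ω => X ω * Y ω) (x - t) := by
  have hY0 := tail_zero_pos Y hYm hYnonneg hYnd
  obtain ⟨b, hb, hYb⟩ := exists_gt_tail Y hYm 0 hY0
  unfold gammaOverBeta
  split_ifs with hbdd
  · set β := sSup {y : ℝ | 0 < rvTail Y y} with hβ
    have hβ0 : 0 < β := lt_of_lt_of_le hb (le_csSup hbdd hYb)
    have hYβ : ∀ᵐ y ∂(Measure.map Y ℙ), y ≤ β := by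
      have h0 : ¬ 0 < rvTail Y β := by
        intro hpos
        obtain ⟨a, ha, hYa⟩ := exists_gt_tail Y hYm β hpos
        exact absurd (le_csSup hbdd hYa) (not_le.2 ha)
      have h1 : rvTail Y β = 0 := le_antisymm (not_lt.1 h0) ENNReal.toReal_nonneg
      rw [ae_map_iff hYm.aemeasurable measurableSet_Iic, ae_iff]
      simp only [not_le]
      rcases (ENNReal.toReal_eq_zero_iff _).1 h1 with h | h
      · exact h
      · exact absurd h (measure_ne_top _ _)
    have hE0 := Real.exp_pos (γ / β * t)
    set E := Real.exp (γ / β * t) with hE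
    have hEE : Real.exp (γ * (t / β)) = E := by rw [hE]; congr 1; ring
    set c := max (E - ε / 2) (E / 2) with hc
    have hc0 : 0 < c := lt_of_lt_of_le (by positivity) (le_max_right _ _)
    have hcE : c < E := max_lt (by linarith) (by linarith)
    have hcε : E - ε / 2 ≤ c := le_max_left _ _
    obtain ⟨x0, hx0, hlow⟩ := lower_piece X Y hXm hYm hYnonneg hFunb h K hA1 γ hFL t β ht hβ0
      hYβ c hc0 (by rw [hEE]; exact hcE)
    have h2 := (isLittleO_iff.1 (hA2 x0⁻¹ (by positivity)))
      (show 0 < ε / (2 * E) by positivity)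
    filter_upwards [h2, eventually_gt_atTop 0] with x h2 hx
    have hH : 0 ≤ rvTail (fun ω => X ω * Y ω) x := ENNReal.toReal_nonneg
    have h3 := ENNReal.toReal_mono (by finiteness) (hlow x)
    rw [ENNReal.toReal_mul, ENNReal.toReal_ofReal (by positivity)] at h3
    change _ ≤ _ * rvTail (fun ω => X ω * Y ω) (x - t) at h3
    rw [Real.norm_of_nonneg hH, Real.norm_of_nonneg (show 0 ≤ rvTail Y (x0⁻¹ * x) from ENNReal.toReal_nonneg),
    inv_mul_eq_div] at h2
    have hcov : {ω | x < X ω * Y ω} ⊆ {ω | x < X ω * Y ω ∧ Y ω ∈ Ioc 0 (x / x0)} ∪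
        {ω | x / x0 < Y ω} := by
      intro ω (hω : x < X ω * Y ω)
      have hY : 0 < Y ω := by
        rcases (hYnonneg ω).eq_or_lt with h0 | h0
        · rw [← h0] at hω; linarith
        · exact h0
      by_cases c2 : Y ω ≤ x / x0
      · exact Or.inl ⟨hω, hY, c2⟩
      · exact Or.inr (not_le.1 c2)
    have h4 : rvTail (fun ω => X ω * Y ω) x ≤
        (ℙ {ω | x < X ω * Y ω ∧ Y ω ∈ Ioc 0 (x / x0)}).toReal + rvTail Y (x / x0) :=
      (measureReal_mono (μ := (ℙ : Measure Ω)) hcov).trans (measureReal_union_le _ _)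
    rw [inv_mul_eq_div, le_div_iff₀ hc0] at h3
    set H := rvTail (fun ω => X ω * Y ω) x
    set P := (ℙ {ω | x < X ω * Y ω ∧ Y ω ∈ Ioc 0 (x / x0)}).toReal
    have h5 : c * rvTail Y (x / x0) ≤ ε / 2 * H := by
      calc c * rvTail Y (x / x0) ≤ E * (ε / (2 * E) * H) :=
            mul_le_mul hcE.le h2 ENNReal.toReal_nonneg hE0.le
        _ = ε / 2 * H := by field_simp
    have h6 : c * H ≤ c * (P + rvTail Y (x / x0)) := mul_le_mul_of_nonneg_left h4 hc0.le
    have h7 : (E - ε / 2) * H ≤ c * H := mul_le_mul_of_nonneg_right hcε hH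
    linarith
  · refine Eventually.of_forall fun x => ?_
    have hH : 0 ≤ rvTail (fun ω => X ω * Y ω) x := ENNReal.toReal_nonneg
    have := rvTail_anti (fun ω => X ω * Y ω) (show x - t ≤ x by linarith)
    simp only [zero_mul, Real.exp_zero]
    nlinarith

theorem product_memL_of_assumption1 {Ω : Type*} [MeasureSpace Ω] [IsProbabilityMeasure (ℙ : Measure Ω)]
    (X Y : Ω → ℝ) (hXm : Measurable X) (hYm : Measurable Y)
    (hYnonneg : ∀ ω, 0 ≤ Y ω)
    (hFunb : UnboundedDist X)
    (hXnd : ℙ {ω | X ω = 0} ≠ 1) (hYnd : ℙ {ω | Y ω = 0} ≠ 1)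
    (h : ℝ → ℝ) (K : ℝ → ℝ → ℝ) (hA1 : Assumption1 X Y h K) (hA2 : Assumption2 X Y)
    (γ : ℝ) (hγ : 0 ≤ γ) (hFL : MemLGamma X γ) :
    MemLGamma (fun ω => X ω * Y ω) (gammaOverBeta Y γ) := by
  have hunb : UnboundedDist (fun ω => X ω * Y ω) := by
    intro x _
    obtain ⟨a, ha, hYa⟩ := exists_gt_tail Y hYm 0 (tail_zero_pos Y hYm hYnonneg hYnd)
    obtain ⟨c, x0, hc, hx0, hbig⟩ := big_bound X Y hXm hYm hYnonneg hFunb h K hA1 a ha hYa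
    have h1 := hbig (max x (a * x0)) (le_max_right _ _)
    have h2 := mul_pos hc (rvTail_pos hFunb (max x (a * x0) / a))
    exact (h2.trans_le h1).trans_le (rvTail_anti _ (le_max_left _ _))
  refine ⟨hunb, fun t ht => ?_⟩
  have hE := Real.exp_pos (gammaOverBeta Y γ * t)
  refine isLittleO_iff.2 fun ε hε => ?_
  have hε' : 0 < ε * Real.exp (gammaOverBeta Y γ * t) := mul_pos hε hE
  filter_upwards [memL_upper X Y hXm hYm hYnonneg hFunb hYnd h K hA1 hA2 γ hγ hFL t ht _ hε',
    memL_lower X Y hXm hYm hYnonneg hFunb hYnd h K hA1 hA2 γ hγ hFL t ht _ hε'] with x h1 h2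
  have hp := rvTail_pos hunb x
  simp only [Pi.sub_apply]
  rw [Real.norm_eq_abs, Real.norm_eq_abs, abs_of_pos (mul_pos hE hp), abs_le]
  constructor <;> linarith
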